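/- Fix l > 0 and parameters C1 > 0, C2 > 0, m1, m2 ∈ ℝ, and let μ = (μ1, μ2, μ3, μ4) = Φ(C1, C2, m1, m2). Let ψ : {ν ∈ (ℝ>0)⁴ : ν2·ν3·ν4 < ν1³} → ℝ be defined by ψ(ν) = 3l² / log(ν1³/(ν2·ν3·ν4)). Then the squared Euclidean norm of the gradient of ψ at μ equals (C2⁴ · exp(2(m1² + m2²)/C2) / (9 · C1² · l⁴)) · ( 9 + exp(2l(l − 2m2)/C2) + exp(2l(l + √3·m1 + m2)/C2) + exp(2l(l − √3·m1 + m2)/C2) ). -/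

import Mathlib

open Real

/-- The Gaussian field `F(x1,x2) = C1 * exp(-((x1-m1)^2+(x2-m2)^2)/C2)`. -/
noncomputable def gaussF (C1 C2 m1 m2 x1 x2 : ℝ) : ℝ :=
  C1 * Real.exp (-((x1 - m1) ^ 2 + (x2 - m2) ^ 2) / C2)

theorem grad_aux (c : ℝ) (μ : EuclideanSpace ℝ (Fin 4)) (h : ∀ i, 0 < μ i)
    (L : ℝ) (hL : 3 * Real.log (μ 0) - Real.log (μ 1) - Real.log (μ 2) - Real.log (μ 3) = L)
    (hL0 : L ≠ 0) :
    HasGradientAt (fun ν : EuclideanSpace ℝ (Fin 4) =>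
      c / Real.log ((ν 0) ^ 3 / (ν 1 * ν 2 * ν 3)))
      (WithLp.toLp 2 ![-(c / L ^ 2) * (3 / μ 0), (c / L ^ 2) * (1 / μ 1),
        (c / L ^ 2) * (1 / μ 2), (c / L ^ 2) * (1 / μ 3)]) μ := by
  have hp : ∀ i : Fin 4, HasFDerivAt (fun ν : EuclideanSpace ℝ (Fin 4) => ν i)
      (EuclideanSpace.proj i : EuclideanSpace ℝ (Fin 4) →L[ℝ] ℝ) μ := fun i =>
    (EuclideanSpace.proj i : EuclideanSpace ℝ (Fin 4) →L[ℝ] ℝ).hasFDerivAt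
  have hlog := fun i => (hp i).log (h i).ne'
  have hsum := ((((hlog 0).const_mul 3).sub (hlog 1)).sub (hlog 2)).sub (hlog 3)
  have hinv := (hasDerivAt_inv (x := L) hL0).const_mul c
  have hinv' := hinv.comp_hasFDerivAt_of_eq μ hsum hL.symm
  have hev : (fun ν : EuclideanSpace ℝ (Fin 4) =>
      c / Real.log ((ν 0) ^ 3 / (ν 1 * ν 2 * ν 3))) =ᶠ[nhds μ] (fun ν =>
      c * (3 * Real.log (ν 0) - Real.log (ν 1) - Real.log (ν 2) - Real.log (ν 3))⁻¹) := by
    have he : ∀ i, ∀ᶠ ν : EuclideanSpace ℝ (Fin 4) in nhds μ, ν i ≠ 0 := fun i =>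
      (hp i).continuousAt.eventually_ne (h i).ne'
    filter_upwards [he 0, he 1, he 2, he 3] with ν h0 h1 h2 h3
    rw [Real.log_div (by positivity) (by positivity), Real.log_mul (by positivity) h3,
      Real.log_mul h1 h2, Real.log_pow, div_eq_mul_inv]
    congr 2
    push_cast
    ring
  rw [hasGradientAt_iff_hasFDerivAt]
  refine HasFDerivAt.congr_of_eventuallyEq ?_ hev
  refine hinv'.congr_fderiv ?_
  ext v
  simp [PiLp.inner_apply, Fin.sum_univ_four]
  ring

/-- The squared norm of the gradient of the map recovering `C2` from the four
measurements, evaluated at the true measurement vector, equals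
`S(l; C2)/σ²`. -/
theorem sq_norm_gradient_C2_estimator
    (l C1 C2 m1 m2 : ℝ) (hl : 0 < l) (hC1 : 0 < C1) (hC2 : 0 < C2)
    (μ : EuclideanSpace ℝ (Fin 4))
    (hμ0 : μ 0 = gaussF C1 C2 m1 m2 0 0)
    (hμ1 : μ 1 = gaussF C1 C2 m1 m2 0 l)
    (hμ2 : μ 2 = gaussF C1 C2 m1 m2 (-(Real.sqrt 3 / 2) * l) (-(l / 2)))
    (hμ3 : μ 3 = gaussF C1 C2 m1 m2 ((Real.sqrt 3 / 2) * l) (-(l / 2)))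
    (ψ : EuclideanSpace ℝ (Fin 4) → ℝ)
    (hψ : ∀ ν : EuclideanSpace ℝ (Fin 4),
      ψ ν = 3 * l ^ 2 / Real.log ((ν 0) ^ 3 / (ν 1 * ν 2 * ν 3))) :
    ‖gradient ψ μ‖ ^ 2 =
      (C2 ^ 4 * Real.exp (2 * (m1 ^ 2 + m2 ^ 2) / C2) / (9 * C1 ^ 2 * l ^ 4)) *
        (9 + Real.exp (2 * l * (l - 2 * m2) / C2)
          + Real.exp (2 * l * (l + Real.sqrt 3 * m1 + m2) / C2)
          + Real.exp (2 * l * (l - Real.sqrt 3 * m1 + m2) / C2)) := by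
  have hs : Real.sqrt 3 ^ 2 = 3 := Real.sq_sqrt (by norm_num)
  have hpos : ∀ i, 0 < μ i := by
    intro i
    fin_cases i <;> simp [hμ0, hμ1, hμ2, hμ3, gaussF] <;> positivity
  have hlogF : ∀ x y, Real.log (gaussF C1 C2 m1 m2 x y)
      = Real.log C1 + -((x - m1) ^ 2 + (y - m2) ^ 2) / C2 := by
    intro x y
    rw [gaussF, Real.log_mul hC1.ne' (Real.exp_ne_zero _), Real.log_exp]
  have hL : 3 * Real.log (μ 0) - Real.log (μ 1) - Real.log (μ 2) - Real.log (μ 3)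
      = 3 * l ^ 2 / C2 := by
    rw [hμ0, hμ1, hμ2, hμ3, hlogF, hlogF, hlogF, hlogF]
    field_simp
    ring_nf
    rw [hs]
    ring
  have hg := grad_aux (3 * l ^ 2) μ hpos _ hL (by positivity)
  have hψ' : ψ = fun ν : EuclideanSpace ℝ (Fin 4) =>
      3 * l ^ 2 / Real.log ((ν 0) ^ 3 / (ν 1 * ν 2 * ν 3)) := funext hψ
  have hF : ∀ x y e, 2 * ((x - m1) ^ 2 + (y - m2) ^ 2) = 2 * (m1 ^ 2 + m2 ^ 2) + e →
      (1 / gaussF C1 C2 m1 m2 x y) ^ 2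
        = Real.exp (2 * (m1 ^ 2 + m2 ^ 2) / C2) / C1 ^ 2 * Real.exp (e / C2) := by
    intro x y e he
    have : Real.exp (2 * (m1 ^ 2 + m2 ^ 2) / C2) * Real.exp (e / C2)
        = (Real.exp (-((x - m1) ^ 2 + (y - m2) ^ 2) / C2))⁻¹ ^ 2 := by
      rw [← Real.exp_neg, ← Real.exp_add, ← Real.exp_nat_mul, ← add_div, ← he]
      congr 1
      push_cast
      ring
    rw [gaussF, div_mul_eq_mul_div, this, one_div, mul_inv, mul_pow]
    field_simp
  have f0 := hF 0 0 0 (by ring)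
  have f1 := hF 0 l (2 * l * (l - 2 * m2)) (by ring)
  have f2 := hF (-(Real.sqrt 3 / 2) * l) (-(l / 2)) (2 * l * (l + Real.sqrt 3 * m1 + m2))
    (by linear_combination (l ^ 2 / 2) * hs)
  have f3 := hF ((Real.sqrt 3 / 2) * l) (-(l / 2)) (2 * l * (l - Real.sqrt 3 * m1 + m2))
    (by linear_combination (l ^ 2 / 2) * hs)
  rw [← hμ0, zero_div, Real.exp_zero, mul_one] at f0
  rw [← hμ1] at f1
  rw [← hμ2] at f2
  rw [← hμ3] at f3
  rw [hψ', hg.gradient, EuclideanSpace.real_norm_sq_eq, Fin.sum_univ_four]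
  have hk : 3 * l ^ 2 / (3 * l ^ 2 / C2) ^ 2 = C2 ^ 2 / (3 * l ^ 2) := by
    field_simp
  simp only [hk]
  have e : ∀ a b d f k : ℝ, (-k * (3 / a)) ^ 2 + (k * (1 / b)) ^ 2 + (k * (1 / d)) ^ 2
      + (k * (1 / f)) ^ 2
      = k ^ 2 * (9 * (1 / a) ^ 2 + (1 / b) ^ 2 + (1 / d) ^ 2 + (1 / f) ^ 2) := by
    intros; ring
  refine (e _ _ _ _ _).trans ?_
  rw [f0, f1, f2, f3]
  field_simp
  ring
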